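/- arXiv:1905.09736 — 2 statements merged into one kernel-verified Lean document; each statement's English description precedes it below -/
import Mathlib

section
/- Let X, Y be real r×n matrices, let A, A'', Q₃ be real r×r matrices, and let ρ > 0. Then the matrix ρ·1 + X Xᵀ is positive definite (hence invertible), and A'⋆ = (Y Xᵀ + ρ (A − A'' + Q₃)) (ρ·1 + X Xᵀ)⁻¹ is the unique minimizer over real r×r matrices A' of the function A' ↦ (1/2)‖A' X − Y‖_F² + (ρ/2)‖A − A' − A'' + Q₃‖_F². -/
/-!
The squared Frobenius norm is `tr (M Mᵀ)`, so the objective `f` is a quadratic polynomial in `A'`.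
The candidate `S` solves the normal equation `S (ρ·1 + X Xᵀ) = Y Xᵀ + ρ (A − A'' + Q₃)`, which says
that the gradient of `f` vanishes at `S`. Expanding around `S` therefore leaves no linear term:
`f A' = f S + (1/2)‖(A' − S) X‖² + (ρ/2)‖A' − S‖²` (`objective_eq_of_normal_equation`).
Minimality is immediate, and equality forces `‖A' − S‖ = 0`.
-/

open Matrix

/-- The Frobenius norm of a real matrix: `‖M‖_F = sqrt (∑ i j, M i j ^ 2)`. -/
noncomputable def frobNorm {m n : Type*} [Fintype m] [Fintype n]
    (M : Matrix m n ℝ) : ℝ :=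
  Real.sqrt (∑ i, ∑ j, (M i j) ^ 2)

theorem frobNorm_sq {m n : Type*} [Fintype m] [Fintype n] (M : Matrix m n ℝ) :
    frobNorm M ^ 2 = (M * Mᵀ).trace := by
  rw [frobNorm, Real.sq_sqrt (by positivity)]
  simp [Matrix.trace, Matrix.mul_apply, sq]

theorem frobNorm_add_sq {m n : Type*} [Fintype m] [Fintype n] (M N : Matrix m n ℝ) :
    frobNorm (M + N) ^ 2 = frobNorm M ^ 2 + 2 * (M * Nᵀ).trace + frobNorm N ^ 2 := by
  have h : (N * Mᵀ).trace = (M * Nᵀ).trace := by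
    rw [← Matrix.trace_transpose, Matrix.transpose_mul, Matrix.transpose_transpose]
  simp only [frobNorm_sq, Matrix.transpose_add, Matrix.add_mul, Matrix.mul_add,
    Matrix.trace_add, h]
  ring

theorem frobNorm_neg {m n : Type*} [Fintype m] [Fintype n] (M : Matrix m n ℝ) :
    frobNorm (-M) = frobNorm M := by
  simp [frobNorm]

theorem eq_zero_of_frobNorm_sq_le {m n : Type*} [Fintype m] [Fintype n] (M : Matrix m n ℝ)
    (h : frobNorm M ^ 2 ≤ 0) : M = 0 := by
  have h0 : frobNorm M ^ 2 = 0 := le_antisymm h (sq_nonneg _)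
  rw [frobNorm_sq, ← Matrix.conjTranspose_eq_transpose_of_trivial,
    Matrix.trace_mul_conjTranspose_self_eq_zero_iff] at h0
  exact h0

theorem posDef_smul_one_add_mul_transpose {r n : ℕ} (X : Matrix (Fin r) (Fin n) ℝ) {ρ : ℝ}
    (hρ : 0 < ρ) : (ρ • (1 : Matrix (Fin r) (Fin r) ℝ) + X * Xᵀ).PosDef := by
  have h := Matrix.posSemidef_self_mul_conjTranspose X
  rw [Matrix.conjTranspose_eq_transpose_of_trivial] at h
  exact (Matrix.PosDef.one.smul hρ).add_posSemidef h

/-- Exact second-order expansion of the objective around a solution `S` of the normal equation,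
where the linear term vanishes. -/
theorem objective_eq_of_normal_equation {r n : ℕ} (X Y : Matrix (Fin r) (Fin n) ℝ)
    (A A'' Q₃ S : Matrix (Fin r) (Fin r) ℝ) (ρ : ℝ)
    (hS : S * (ρ • (1 : Matrix (Fin r) (Fin r) ℝ) + X * Xᵀ) = Y * Xᵀ + ρ • (A - A'' + Q₃))
    (A' : Matrix (Fin r) (Fin r) ℝ) :
    (1 / 2) * frobNorm (A' * X - Y) ^ 2 + (ρ / 2) * frobNorm (A - A' - A'' + Q₃) ^ 2
      = (1 / 2) * frobNorm (S * X - Y) ^ 2 + (ρ / 2) * frobNorm (A - S - A'' + Q₃) ^ 2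
        + (1 / 2) * frobNorm ((A' - S) * X) ^ 2 + (ρ / 2) * frobNorm (A' - S) ^ 2 := by
  have h1 : A' * X - Y = (S * X - Y) + (A' - S) * X := by
    rw [Matrix.sub_mul]; abel
  have h2 : A - A' - A'' + Q₃ = (A - S - A'' + Q₃) + -(A' - S) := by abel
  have hgrad : (S * X - Y) * Xᵀ = ρ • (A - S - A'' + Q₃) := by
    have e : S * (X * Xᵀ) = Y * Xᵀ + ρ • (A - A'' + Q₃) - ρ • S := by
      rw [← hS, Matrix.mul_add, Matrix.mul_smul, Matrix.mul_one]; abel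
    rw [Matrix.sub_mul, Matrix.mul_assoc, e]
    module
  have hcross : ((S * X - Y) * ((A' - S) * X)ᵀ).trace
      = ρ * ((A - S - A'' + Q₃) * (A' - S)ᵀ).trace := by
    rw [Matrix.transpose_mul, ← Matrix.mul_assoc, hgrad, Matrix.smul_mul, Matrix.trace_smul,
      smul_eq_mul]
  rw [h1, h2, frobNorm_add_sq, frobNorm_add_sq, frobNorm_neg, hcross, Matrix.transpose_neg,
    Matrix.mul_neg, Matrix.trace_neg]
  ring

/-- For `ρ > 0`, the matrix `ρ·1 + X Xᵀ` is positive definite, and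
`A'⋆ = (Y Xᵀ + ρ (A − A'' + Q₃)) (ρ·1 + X Xᵀ)⁻¹` is the unique minimizer of
`A' ↦ (1/2)‖A' X − Y‖_F² + (ρ/2)‖A − A' − A'' + Q₃‖_F²`. -/
theorem cdmd2_Aprime_unique_minimizer (r n : ℕ) (X Y : Matrix (Fin r) (Fin n) ℝ)
    (A A'' Q₃ : Matrix (Fin r) (Fin r) ℝ) (ρ : ℝ) (hρ : 0 < ρ) :
    (ρ • (1 : Matrix (Fin r) (Fin r) ℝ) + X * Xᵀ).PosDef ∧
    (∀ A' : Matrix (Fin r) (Fin r) ℝ,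
      (1 / 2) * frobNorm ((Y * Xᵀ + ρ • (A - A'' + Q₃))
            * (ρ • (1 : Matrix (Fin r) (Fin r) ℝ) + X * Xᵀ)⁻¹ * X - Y) ^ 2
        + (ρ / 2) * frobNorm (A - (Y * Xᵀ + ρ • (A - A'' + Q₃))
            * (ρ • (1 : Matrix (Fin r) (Fin r) ℝ) + X * Xᵀ)⁻¹ - A'' + Q₃) ^ 2
      ≤ (1 / 2) * frobNorm (A' * X - Y) ^ 2
        + (ρ / 2) * frobNorm (A - A' - A'' + Q₃) ^ 2) ∧
    (∀ A' : Matrix (Fin r) (Fin r) ℝ,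
      (1 / 2) * frobNorm (A' * X - Y) ^ 2
          + (ρ / 2) * frobNorm (A - A' - A'' + Q₃) ^ 2
        = (1 / 2) * frobNorm ((Y * Xᵀ + ρ • (A - A'' + Q₃))
              * (ρ • (1 : Matrix (Fin r) (Fin r) ℝ) + X * Xᵀ)⁻¹ * X - Y) ^ 2
          + (ρ / 2) * frobNorm (A - (Y * Xᵀ + ρ • (A - A'' + Q₃))
              * (ρ • (1 : Matrix (Fin r) (Fin r) ℝ) + X * Xᵀ)⁻¹ - A'' + Q₃) ^ 2 →
      A' = (Y * Xᵀ + ρ • (A - A'' + Q₃))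
              * (ρ • (1 : Matrix (Fin r) (Fin r) ℝ) + X * Xᵀ)⁻¹) := by
  have hpd := posDef_smul_one_add_mul_transpose X hρ
  have hS := Matrix.nonsing_inv_mul_cancel_right
    (ρ • (1 : Matrix (Fin r) (Fin r) ℝ) + X * Xᵀ) (Y * Xᵀ + ρ • (A - A'' + Q₃))
    ((Matrix.isUnit_iff_isUnit_det _).mp hpd.isUnit)
  have key := objective_eq_of_normal_equation X Y A A'' Q₃ _ ρ hS
  refine ⟨hpd, fun A' => ?_, fun A' h => ?_⟩
  · rw [key A']
    have := hρ.le
    rw [add_assoc _ ((1 / 2 : ℝ) * _)]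
    exact le_add_of_nonneg_right (by positivity)
  · rw [key A'] at h
    refine sub_eq_zero.mp (eq_zero_of_frobNorm_sq_le _ ?_)
    refine nonpos_of_mul_nonpos_right ?_ (half_pos hρ)
    linarith [sq_nonneg (frobNorm ((A' - (Y * Xᵀ + ρ • (A - A'' + Q₃))
      * (ρ • (1 : Matrix (Fin r) (Fin r) ℝ) + X * Xᵀ)⁻¹) * X))]
end

section
/- Let X, Y be real r×n matrices such that X Xᵀ and Y Yᵀ are positive definite, and let ν > 0 and μ > 0. Define, for tuples (A, A', B, B', C, A'', B'') of real r×r matrices, the objective h = (1/2)‖A' X − Y‖_F² + (1/2)‖X − B' Y‖_F² + (ν/2)‖C − 1‖_F² + (μ/2)‖A''‖_F² + (μ/2)‖B''‖_F², and the feasible set Ω = { (A, A', B, B', C, A'', B'') : C = A B, C = B A, A = A' + A'', B = B' + B'' }. Then h is coercive on Ω: for every real c, the set of tuples in Ω satisfying h ≤ c is bounded (in the norm ‖A‖_F + ‖A'‖_F + ‖B‖_F + ‖B'‖_F + ‖C‖_F + ‖A''‖_F + ‖B''‖_F). -/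
/-!
Each term of the objective is nonnegative, so on a sublevel set `h ≤ c` every residual
`A' X - Y`, `X - B' Y`, `C - 1`, `A''`, `B''` is bounded. Since `X Xᵀ` is invertible,
`Xᵀ (X Xᵀ)⁻¹` is a right inverse of `X`, and submultiplicativity of the Frobenius norm turns
the bound on `A' X` into a bound on `A'` (`exists_frobNorm_le_mul`); likewise for `B'`.
The identities `A = A' + A''`, `B = B' + B''` and `C = (C - 1) + 1` bound the rest by the
triangle inequality.
-/

open Matrix

section FrobeniusNorm

attribute [local instance] Matrix.frobeniusNormedAddCommGroup

/-- `frobNorm` is Mathlib's Frobenius norm. -/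
lemma frobNorm_eq_norm {m n : Type*} [Fintype m] [Fintype n] (M : Matrix m n ℝ) :
    frobNorm M = ‖M‖ := by
  simp [frobNorm, Matrix.frobenius_norm_def, Real.sqrt_eq_rpow]

lemma frobNorm_nonneg {m n : Type*} [Fintype m] [Fintype n] (M : Matrix m n ℝ) :
    0 ≤ frobNorm M := Real.sqrt_nonneg _

lemma frobNorm_add_le {m n : Type*} [Fintype m] [Fintype n] (M N : Matrix m n ℝ) :
    frobNorm (M + N) ≤ frobNorm M + frobNorm N := by
  simpa only [frobNorm_eq_norm] using norm_add_le M N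

lemma frobNorm_sub_rev {m n : Type*} [Fintype m] [Fintype n] (M N : Matrix m n ℝ) :
    frobNorm (M - N) = frobNorm (N - M) := by
  simpa only [frobNorm_eq_norm] using norm_sub_rev M N

lemma frobNorm_mul_le {l m n : Type*} [Fintype l] [Fintype m] [Fintype n]
    (M : Matrix l m ℝ) (N : Matrix m n ℝ) :
    frobNorm (M * N) ≤ frobNorm M * frobNorm N := by
  simpa only [frobNorm_eq_norm] using Matrix.frobenius_norm_mul M N

end FrobeniusNorm

/-- Right multiplication by a matrix of full row rank is bounded below; the constant is the
norm of the right inverse `Xᵀ (X Xᵀ)⁻¹`. -/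
lemma exists_frobNorm_le_mul {r n : ℕ} (X : Matrix (Fin r) (Fin n) ℝ)
    (hX : (X * Xᵀ).PosDef) :
    ∃ K : ℝ, 0 ≤ K ∧ ∀ M : Matrix (Fin r) (Fin r) ℝ, frobNorm M ≤ frobNorm (M * X) * K := by
  refine ⟨frobNorm (Xᵀ * (X * Xᵀ)⁻¹), frobNorm_nonneg _, fun M => ?_⟩
  have hinv : X * (Xᵀ * (X * Xᵀ)⁻¹) = 1 := by
    rw [← Matrix.mul_assoc]
    exact Matrix.mul_nonsing_inv _ hX.det_pos.ne'.isUnit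
  have hle := frobNorm_mul_le (M * X) (Xᵀ * (X * Xᵀ)⁻¹)
  rwa [Matrix.mul_assoc, hinv, Matrix.mul_one] at hle

lemma le_sqrt_div_of_mul_sq_le {a x c : ℝ} (ha : 0 < a) (h : a * x ^ 2 ≤ c) :
    x ≤ Real.sqrt (c / a) := by
  apply Real.le_sqrt_of_sq_le
  rw [le_div_iff₀ ha]
  linarith

/-- When `X Xᵀ` and `Y Yᵀ` are positive definite and `ν, μ > 0`, the
objective of the modified CDMD problem is coercive on the feasible set
`Ω = {(A, A', B, B', C, A'', B'') : C = A B, C = B A, A = A' + A'', B = B' + B''}`: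
every sublevel set of the objective restricted to `Ω` is bounded. -/
theorem cdmd2_objective_coercive_on_feasible (r n : ℕ)
    (X Y : Matrix (Fin r) (Fin n) ℝ)
    (hX : (X * Xᵀ).PosDef) (hY : (Y * Yᵀ).PosDef)
    (ν μ : ℝ) (hν : 0 < ν) (hμ : 0 < μ) :
    ∀ c : ℝ, ∃ R : ℝ,
      ∀ A A' B B' C A'' B'' : Matrix (Fin r) (Fin r) ℝ,
        C = A * B → C = B * A → A = A' + A'' → B = B' + B'' →
        (1 / 2) * frobNorm (A' * X - Y) ^ 2
            + (1 / 2) * frobNorm (X - B' * Y) ^ 2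
            + (ν / 2) * frobNorm (C - 1) ^ 2
            + (μ / 2) * frobNorm A'' ^ 2
            + (μ / 2) * frobNorm B'' ^ 2 ≤ c →
        frobNorm A + frobNorm A' + frobNorm B + frobNorm B'
            + frobNorm C + frobNorm A'' + frobNorm B'' ≤ R := by
  intro c
  obtain ⟨K, hK, hKX⟩ := exists_frobNorm_le_mul X hX
  obtain ⟨L, hL, hLY⟩ := exists_frobNorm_le_mul Y hY
  set s := Real.sqrt (c / (1 / 2))
  set t := Real.sqrt (c / (ν / 2))
  set u := Real.sqrt (c / (μ / 2))
  refine ⟨2 * ((s + frobNorm Y) * K) + 2 * ((s + frobNorm X) * L)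
    + (t + frobNorm (1 : Matrix (Fin r) (Fin r) ℝ)) + 4 * u, ?_⟩
  intro A A' B B' C A'' B'' _ _ hA hB hc
  have h1 : 0 ≤ (1 / 2) * frobNorm (A' * X - Y) ^ 2 := by positivity
  have h2 : 0 ≤ (1 / 2) * frobNorm (X - B' * Y) ^ 2 := by positivity
  have h3 : 0 ≤ (ν / 2) * frobNorm (C - 1) ^ 2 := by positivity
  have h4 : 0 ≤ (μ / 2) * frobNorm A'' ^ 2 := by positivity
  have h5 : 0 ≤ (μ / 2) * frobNorm B'' ^ 2 := by positivity
  have b1 : frobNorm (A' * X - Y) ≤ s := le_sqrt_div_of_mul_sq_le (by norm_num) (by linarith)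
  have b2 : frobNorm (X - B' * Y) ≤ s := le_sqrt_div_of_mul_sq_le (by norm_num) (by linarith)
  have b3 : frobNorm (C - 1) ≤ t := le_sqrt_div_of_mul_sq_le (by positivity) (by linarith)
  have b4 : frobNorm A'' ≤ u := le_sqrt_div_of_mul_sq_le (by positivity) (by linarith)
  have b5 : frobNorm B'' ≤ u := le_sqrt_div_of_mul_sq_le (by positivity) (by linarith)
  have hAX : frobNorm (A' * X) ≤ s + frobNorm Y := by
    have h := frobNorm_add_le (A' * X - Y) Y
    rw [sub_add_cancel] at h
    linarith
  have hBY : frobNorm (B' * Y) ≤ s + frobNorm X := by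
    have h := frobNorm_add_le (B' * Y - X) X
    rw [sub_add_cancel, frobNorm_sub_rev] at h
    linarith
  have hA' : frobNorm A' ≤ (s + frobNorm Y) * K :=
    (hKX A').trans (mul_le_mul_of_nonneg_right hAX hK)
  have hB' : frobNorm B' ≤ (s + frobNorm X) * L :=
    (hLY B').trans (mul_le_mul_of_nonneg_right hBY hL)
  have hC : frobNorm C ≤ t + frobNorm (1 : Matrix (Fin r) (Fin r) ℝ) := by
    have h := frobNorm_add_le (C - 1) 1
    rw [sub_add_cancel] at h
    linarith
  have hAle : frobNorm A ≤ frobNorm A' + frobNorm A'' := hA ▸ frobNorm_add_le A' A''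
  have hBle : frobNorm B ≤ frobNorm B' + frobNorm B'' := hB ▸ frobNorm_add_le B' B''
  linarith
end
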